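/- Let H be a complex Hilbert space, R a von Neumann algebra acting on H, and Ω ∈ H a vector that is cyclic for the commutant R′. For each n ∈ ℕ let U_n : ℝ → B(H) be a one-parameter group of unitaries (U_n(0) = 1 and U_n(λ+μ) = U_n(λ)U_n(μ) for all λ, μ ∈ ℝ) with values in R, such that U_n(λ) and U_m(μ) commute for all n ≠ m and all λ, μ ∈ ℝ. Assume there are nonnegative constants c_n with ∑_n c_n < ∞ such that ‖U_n(λ)Ω − Ω‖ ≤ c_n |λ| for every λ ∈ ℝ and every n. Then for every λ ∈ ℝ the strong limit U(λ) := s-lim_{n→∞} U_1(λ)U_2(λ)⋯U_n(λ) exists and is unitary, the map λ ↦ U(λ) is a one-parameter group of unitaries, and for every ξ ∈ H the map λ ↦ U(λ)ξ is continuous. -/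

import Mathlib

open Filter Topology

/-!
Call a vector `x` summably displaced if `∑ n, ‖U n g x - x‖` is finite for every `g` and tends to
`0` as `g → 0`. Applying an operator `T` that commutes with every `U n g` multiplies this sum by at
most `‖T‖`, so if `Ω` is summably displaced and cyclic for the commutant, then such vectors are
dense. On a summably displaced vector consecutive partial products differ by exactly
`‖U n g x - x‖`, hence they converge, to a limit within `∑ n, ‖U n g x - x‖` of `x`. Since all
partial products are isometries, convergence and continuity in `g` extend from the dense set to
every vector, and the group law passes to the limit.
-/

section Equicontinuity

variable {ι X α : Type*}

lemma equicontinuous_of_isometry [PseudoMetricSpace X] [PseudoMetricSpace α] {F : ι → X → α}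
    (hF : ∀ i, Isometry (F i)) : Equicontinuous F :=
  (LipschitzWith.uniformEquicontinuous F 1 fun i => (hF i).lipschitz).equicontinuous

lemma isometry_of_forall_tendsto [PseudoMetricSpace X] [PseudoMetricSpace α]
    {l : Filter ι} [l.NeBot] {F : ι → X → α} {f : X → α} (hF : ∀ i, Isometry (F i))
    (hf : ∀ x, Tendsto (F · x) l (𝓝 (f x))) : Isometry f :=
  Isometry.of_dist_eq fun x y =>
    tendsto_nhds_unique ((hf x).dist (hf y)) (by simp only [(hF _).dist_eq, tendsto_const_nhds])

variable [TopologicalSpace X] [UniformSpace α]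

lemma tendsto_apply_of_equicontinuousAt {F : ι → X → α} {l : Filter ι} {x : X} {y : ι → X} {a : α}
    (hF : EquicontinuousAt F x) (hy : Tendsto y l (𝓝 x)) (hx : Tendsto (F · x) l (𝓝 a)) :
    Tendsto (fun i => F i (y i)) l (𝓝 a) :=
  hx.congr_uniformity fun W hW => (hy.eventually (hF W hW)).mono fun i hi => hi i

lemma isClosed_setOf_cauchySeq_of_equicontinuous [Nonempty ι] [SemilatticeSup ι] {F : ι → X → α}
    (hF : Equicontinuous F) : IsClosed {x | CauchySeq (F · x)} := by
  refine isClosed_of_closure_subset fun x hx => cauchySeq_iff_tendsto.2 fun V hV => ?_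
  obtain ⟨W, hW, hWsymm, hWV⟩ := comp_comp_symm_mem_uniformity_sets hV
  obtain ⟨y, hxy, hy⟩ := mem_closure_iff_nhds.1 hx _ (hF x W hW)
  exact ((cauchySeq_iff_tendsto.1 hy).eventually_mem hW).mono fun ⟨m, n⟩ hmn =>
    hWV ⟨F n y, ⟨F m y, hxy m, hmn⟩, hWsymm.symm _ _ (hxy n)⟩

end Equicontinuity

section PartialProducts

variable {ι G M : Type*} [Monoid M]

lemma list_prod_map_mul_of_pairwise_commute {f h : ι → M} {l : List ι}
    (comm : l.Pairwise fun i j => Commute (h i) (f j)) :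
    (l.map fun i => f i * h i).prod = (l.map f).prod * (l.map h).prod := by
  induction l with
  | nil => simp
  | cons i l ih =>
    obtain ⟨comm_head, comm_tail⟩ := List.pairwise_cons.1 comm
    have comm_prod : Commute (h i) (l.map f).prod :=
      Commute.list_prod_right _ _ (List.forall_mem_map.2 comm_head)
    simp only [List.map_cons, List.prod_cons, ih comm_tail]
    exact comm_prod.mul_mul_mul_comm _ _

variable [AddMonoid G]

/-- The partial products `U 0 g * ⋯ * U (n - 1) g` of a sequence of representations of an additive
monoid with commuting ranges, again a representation. A one-parameter group is encoded as an
`AddChar` on `ℝ`; the operators within a single `U n` need not commute. -/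
def partialProd (U : ℕ → AddChar G M) (comm : Pairwise fun m n => ∀ g h, Commute (U m g) (U n h))
    (n : ℕ) : AddChar G M where
  toFun g := ((List.range n).map fun k => U k g).prod
  map_zero_eq_one' := by simp
  map_add_eq_mul' g h := by
    simp only [AddChar.map_add_eq_mul]
    exact list_prod_map_mul_of_pairwise_commute <|
      List.nodup_range.pairwise_of_forall_ne fun _ _ _ _ hij => comm hij h g

variable {U : ℕ → AddChar G M} (comm : Pairwise fun m n => ∀ g h, Commute (U m g) (U n h))

lemma partialProd_zero_apply (g : G) : partialProd U comm 0 g = 1 := rfl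

lemma partialProd_succ_apply (n : ℕ) (g : G) :
    partialProd U comm (n + 1) g = partialProd U comm n g * U n g :=
  List.prod_range_succ (fun k => U k g) n

end PartialProducts

section Isometric

variable {𝕜 E G : Type*} [NontriviallyNormedField 𝕜] [NormedAddCommGroup E] [NormedSpace 𝕜 E]

section PartialProducts

variable [AddMonoid G] {U : ℕ → AddChar G (E →L[𝕜] E)}
  (comm : Pairwise fun m n => ∀ g h, Commute (U m g) (U n h)) (hU : ∀ n g, Isometry (U n g))

include hU

lemma isometry_partialProd (n : ℕ) (g : G) : Isometry (partialProd U comm n g) := by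
  induction n with
  | zero =>
    rw [partialProd_zero_apply]
    exact isometry_id
  | succ n ih =>
    rw [partialProd_succ_apply]
    exact ih.comp (hU n g)

lemma dist_partialProd_succ (n : ℕ) (g : G) (x : E) :
    dist (partialProd U comm n g x) (partialProd U comm (n + 1) g x) = ‖U n g x - x‖ := by
  rw [partialProd_succ_apply, mul_apply_eq_comp, (isometry_partialProd comm hU n g).dist_eq,
    dist_comm, dist_eq_norm]

lemma cauchySeq_partialProd {g : G} {x : E} (hx : Summable fun n => ‖U n g x - x‖) :
    CauchySeq fun n => partialProd U comm n g x :=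
  cauchySeq_of_dist_le_of_summable _ (fun n => (dist_partialProd_succ comm hU n g x).le) hx

lemma norm_sub_le_tsum_of_tendsto_partialProd {g : G} {x y : E}
    (hx : Summable fun n => ‖U n g x - x‖)
    (hy : Tendsto (fun n => partialProd U comm n g x) atTop (𝓝 y)) :
    ‖y - x‖ ≤ ∑' n, ‖U n g x - x‖ := by
  have h := dist_le_tsum_of_dist_le_of_tendsto₀ _
    (fun n => (dist_partialProd_succ comm hU n g x).le) hx hy
  rwa [partialProd_zero_apply, one_apply_eq_self, dist_comm, dist_eq_norm] at h

end PartialProducts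

lemma exists_addChar_tendsto_of_isometry [AddMonoid G] {ι : Type*}
    {l : Filter ι} [l.NeBot] {P : ι → AddChar G (E →L[𝕜] E)}
    (hP : ∀ i g, Isometry (P i g)) (hlim : ∀ g x, ∃ y, Tendsto (fun i => P i g x) l (𝓝 y)) :
    ∃ V : AddChar G (E →L[𝕜] E),
      (∀ g, Isometry (V g)) ∧ ∀ g x, Tendsto (fun i => P i g x) l (𝓝 (V g x)) := by
  choose W hW using hlim
  have hW_isometry (g : G) : Isometry (W g) := isometry_of_forall_tendsto (hP · g) (hW g)
  let V (g : G) : E →L[𝕜] E :=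
    ⟨linearMapOfTendsto (W g) (fun i => (P i g : E →ₗ[𝕜] E)) (tendsto_pi_nhds.2 (hW g)),
      (hW_isometry g).continuous⟩
  have hV : ∀ g x, Tendsto (fun i => P i g x) l (𝓝 (V g x)) := hW
  have hV_zero : V 0 = 1 := by
    ext x
    refine tendsto_nhds_unique (hV 0 x) ?_
    simp only [AddChar.map_zero_eq_one, tendsto_const_nhds]
  have hV_add (g h : G) : V (g + h) = V g * V h := by
    ext x
    refine tendsto_nhds_unique (hV (g + h) x) ?_
    simp only [AddChar.map_add_eq_mul, mul_apply_eq_comp]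
    exact tendsto_apply_of_equicontinuousAt (equicontinuous_of_isometry (hP · g) (V h x)) (hV h x)
      (hV g (V h x))
  exact ⟨⟨V, hV_zero, hV_add⟩, hW_isometry, hV⟩

lemma continuous_addChar_apply_of_dense [AddGroup G] [TopologicalSpace G]
    [SeparatelyContinuousAdd G] {V : AddChar G (E →L[𝕜] E)} (hV : ∀ g, Isometry (V g))
    (hdense : Dense {x | Tendsto (fun g => V g x) (𝓝 0) (𝓝 x)}) (x : E) :
    Continuous fun g => V g x := by
  have hclosed : IsClosed {x | Tendsto (fun g => V g x) (𝓝 0) (𝓝 x)} :=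
    (equicontinuous_of_isometry hV).isClosed_setOfPred_tendsto continuous_id
  have hzero : Tendsto (fun g => V g x) (𝓝 0) (𝓝 x) :=
    hclosed.closure_subset (hdense x)
  refine continuous_iff_continuousAt.2 fun g => ?_
  have hsub : Tendsto (fun h => -g + h) (𝓝 g) (𝓝 0) :=
    (continuous_const_add (-g)).tendsto' g 0 (neg_add_cancel g)
  have hfactor (h : G) : V h x = V g (V (-g + h) x) := by
    rw [← mul_apply_eq_comp, ← AddChar.map_add_eq_mul, add_neg_cancel_left]
  exact (((V g).continuous.tendsto x).comp (hzero.comp hsub)).congr fun h => (hfactor h).symm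

section SummablyDisplaced

variable [AddMonoid G] [TopologicalSpace G]

/-- The vectors on which the infinite product of the representations `U n` converges absolutely,
with a sum of displacements that vanishes at the identity. Since `∑'` takes the value `0` on
divergent series, the second condition alone would not control the displacements. -/
structure SummablyDisplaced (U : ℕ → AddChar G (E →L[𝕜] E)) (x : E) : Prop where
  summable : ∀ g, Summable fun n => ‖U n g x - x‖
  tendsto_tsum : Tendsto (fun g => ∑' n, ‖U n g x - x‖) (𝓝 0) (𝓝 0)

namespace SummablyDisplaced

variable {U : ℕ → AddChar G (E →L[𝕜] E)} {x : E}

lemma of_le {b : ℕ → G → ℝ} (hle : ∀ n g, ‖U n g x - x‖ ≤ b n g)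
    (hsum : ∀ g, Summable fun n => b n g) (hzero : Tendsto (fun g => ∑' n, b n g) (𝓝 0) (𝓝 0)) :
    SummablyDisplaced U x := by
  have summable (g : G) : Summable fun n => ‖U n g x - x‖ :=
    (hsum g).of_nonneg_of_le (fun n => norm_nonneg _) (hle · g)
  exact ⟨summable, squeeze_zero (fun g => tsum_nonneg fun n => norm_nonneg _)
    (fun g => (summable g).tsum_le_tsum (hle · g) (hsum g)) hzero⟩

lemma apply_of_mem_centralizer (hx : SummablyDisplaced U x) {T : E →L[𝕜] E}
    (hT : T ∈ Set.centralizer (⋃ n, Set.range (U n))) : SummablyDisplaced U (T x) := by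
  have hle (n : ℕ) (g : G) : ‖U n g (T x) - T x‖ ≤ ‖T‖ * ‖U n g x - x‖ := by
    have comm : U n g (T x) = T (U n g x) :=
      congr($(hT (U n g) (Set.mem_iUnion_of_mem n (Set.mem_range_self g))) x)
    rw [comm, ← map_sub]
    exact T.le_opNorm _
  refine of_le hle (fun g => (hx.summable g).mul_left _) ?_
  simpa only [tsum_mul_left, mul_zero] using hx.tendsto_tsum.const_mul ‖T‖

end SummablyDisplaced

lemma span_image_apply_centralizer (S : Set (E →L[𝕜] E)) (x : E) :
    (Submodule.span 𝕜 ((fun T : E →L[𝕜] E => T x) '' S.centralizer) : Set E) =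
      (fun T : E →L[𝕜] E => T x) '' S.centralizer :=
  congrArg _ <| Submodule.span_eq <|
    (Subalgebra.centralizer 𝕜 S).toSubmodule.map (ContinuousLinearMap.apply 𝕜 E x).toLinearMap

lemma dense_setOf_summablyDisplaced_of_cyclic {U : ℕ → AddChar G (E →L[𝕜] E)} {Ω : E}
    (hΩ : SummablyDisplaced U Ω)
    (hcyclic : Dense (Submodule.span 𝕜 ((fun T : E →L[𝕜] E => T Ω) ''
      Set.centralizer (⋃ n, Set.range (U n))) : Set E)) :
    Dense {x | SummablyDisplaced U x} := by
  rw [span_image_apply_centralizer] at hcyclic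
  exact hcyclic.mono <| Set.image_subset_iff.2 fun T hT => hΩ.apply_of_mem_centralizer hT

end SummablyDisplaced

theorem infinite_product_of_one_parameter_groups_general [CompleteSpace E] [AddGroup G]
    [TopologicalSpace G] [SeparatelyContinuousAdd G] (U : ℕ → AddChar G (E →L[𝕜] E))
    (hU : ∀ n g, Isometry (U n g)) (comm : Pairwise fun m n => ∀ g h, Commute (U m g) (U n h))
    (hdense : Dense {x | SummablyDisplaced U x}) :
    ∃ V : AddChar G (E →L[𝕜] E),
      (∀ g, Isometry (V g)) ∧
      (∀ g x, Tendsto (fun n => ((List.range n).map fun k => U k g).prod x) atTop (𝓝 (V g x))) ∧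
      ∀ x, Continuous fun g => V g x := by
  have hP := isometry_partialProd comm hU
  have hcauchy (g : G) (x : E) : CauchySeq fun n => partialProd U comm n g x :=
    have hclosed := isClosed_setOf_cauchySeq_of_equicontinuous (equicontinuous_of_isometry (hP · g))
    hclosed.closure_subset
      (hdense.mono (fun y hy => cauchySeq_partialProd comm hU (hy.summable g)) x)
  obtain ⟨V, hV, hlim⟩ := exists_addChar_tendsto_of_isometry hP
    fun g x => cauchySeq_tendsto_of_complete (hcauchy g x)
  refine ⟨V, hV, hlim, continuous_addChar_apply_of_dense hV (hdense.mono fun x hx => ?_)⟩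
  exact tendsto_iff_norm_sub_tendsto_zero.2 <| squeeze_zero (fun g => norm_nonneg _)
    (fun g => norm_sub_le_tsum_of_tendsto_partialProd comm hU (hx.summable g) (hlim g x))
    hx.tendsto_tsum

end Isometric

section Hilbert

variable {𝕜 H : Type*} [RCLike 𝕜] [NormedAddCommGroup H] [InnerProductSpace 𝕜 H] [CompleteSpace H]

lemma isometry_of_mem_unitary {A : H →L[𝕜] H} (hA : A ∈ unitary (H →L[𝕜] H)) : Isometry A :=
  AddMonoidHomClass.isometry_of_norm A (A.norm_map_of_mem_unitary hA)

lemma mem_unitary_of_isometry_of_isUnit {A : H →L[𝕜] H} (hA : Isometry A) (hunit : IsUnit A) :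
    A ∈ unitary (H →L[𝕜] H) :=
  hunit.mem_unitary_of_star_mul_self (A.isometry_iff_adjoint_comp_self.1 hA)

end Hilbert

/-- **Lemma 3.1 of the paper, group form.**  Let `H` be a complex Hilbert
space, `R` a von Neumann algebra on `H`, `Ω` cyclic for the commutant `R′`.  For each `n`
let `U n : ℝ → B(H)` be a one-parameter unitary group with values in `R`, with
`U n λ` and `U m μ` commuting for `n ≠ m`, and assume `‖U n λ Ω − Ω‖ ≤ c n * |λ|` with
`∑ c n < ∞`.  Then the strong limits `V λ` of the partial products exist, are unitary,
form a one-parameter group, and `λ ↦ V λ ξ` is continuous for every `ξ`. -/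
theorem infinite_product_of_one_parameter_groups
    {H : Type*} [NormedAddCommGroup H] [InnerProductSpace ℂ H] [CompleteSpace H]
    (R : VonNeumannAlgebra H) (Ω : H)
    (hcyclic : Dense
      (↑(Submodule.span ℂ ((fun T : H →L[ℂ] H => T Ω) '' (R.commutant : Set (H →L[ℂ] H)))) :
        Set H))
    (U : ℕ → ℝ → H →L[ℂ] H)
    (hUR : ∀ n (fun_lambda : ℝ), U n fun_lambda ∈ R)
    (hUunit : ∀ n (l : ℝ), U n l ∈ unitary (H →L[ℂ] H))
    (hUzero : ∀ n, U n 0 = 1)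
    (hUgroup : ∀ n (l m : ℝ), U n (l + m) = U n l * U n m)
    (hUcomm : ∀ n m, n ≠ m → ∀ (l m' : ℝ), U n l * U m m' = U m m' * U n l)
    (c : ℕ → ℝ) (hc : ∀ n, 0 ≤ c n) (hcsum : Summable c)
    (hbound : ∀ n (l : ℝ), ‖U n l Ω - Ω‖ ≤ c n * |l|) :
    ∃ V : ℝ → H →L[ℂ] H,
      (∀ l : ℝ, V l ∈ unitary (H →L[ℂ] H)) ∧
      (∀ (l : ℝ) (ξ : H),
        Tendsto (fun n => ((List.range n).map (fun k => U k l)).prod ξ) atTop (𝓝 (V l ξ))) ∧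
      V 0 = 1 ∧
      (∀ l m : ℝ, V (l + m) = V l * V m) ∧
      (∀ ξ : H, Continuous fun l : ℝ => V l ξ) := by
  let W (n : ℕ) : AddChar ℝ (H →L[ℂ] H) := ⟨U n, hUzero n, hUgroup n⟩
  have hΩ : SummablyDisplaced W Ω := by
    refine .of_le hbound (fun l => hcsum.mul_right |l|) ?_
    simpa only [tsum_mul_right, abs_zero, mul_zero] using
      (continuous_abs.tendsto (0 : ℝ)).const_mul (∑' n, c n)
  have hcommutant : (R.commutant : Set (H →L[ℂ] H)) ⊆ Set.centralizer (⋃ n, Set.range (W n)) := by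
    rw [VonNeumannAlgebra.coe_commutant]
    exact Set.centralizer_subset (Set.iUnion_subset fun n => Set.range_subset_iff.2 (hUR n))
  have hdense : Dense {ξ | SummablyDisplaced W ξ} :=
    dense_setOf_summablyDisplaced_of_cyclic hΩ
      (hcyclic.mono (Submodule.span_mono (Set.image_mono hcommutant)))
  obtain ⟨V, hV, hlim, hcont⟩ := infinite_product_of_one_parameter_groups_general W
    (fun n l => isometry_of_mem_unitary (hUunit n l)) (fun m n hmn => hUcomm m n hmn) hdense
  exact ⟨V, fun l => mem_unitary_of_isometry_of_isUnit (hV l) (V.val_isUnit l), hlim,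
    V.map_zero_eq_one, V.map_add_eq_mul, hcont⟩
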